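/- Let H ⊆ B_L be equivariant and let Иa:ν.φ be a formula with no free variables. Then the following are equivalent: (1) H ⊨ Иa:ν.φ, i.e., H ⊨ (b a)·φ for every name b of sort ν with b ∉ supp(Иa:ν.φ); (2) H ⊨ φ; (3) the set of names b of sort ν such that H ⊨ (a b)·φ is cofinite in the set of names of sort ν; (4) H ⊨ (a b)·φ for some name b of sort ν with b ∉ supp(Иa:ν.φ). -/

import Mathlib

/-!
Why the theorem holds. Everything rests on equivariance of satisfaction: if `H` is stable under
same-sorted swappings, then `H ⊨ (a b)·φ` iff `H ⊨ φ` for all names `a`, `b` of the same sort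
(`fmSat_swap`), whether or not `b` is fresh. Each judgement on terms (freshness, `≈`, `∼`,
well-sortedness, free names) is preserved by a swapping, and being an involution the swapping
also reflects it; induction on the size of the formula (`fmSat_rename`) extends this to formulas.
In the quantifier cases the bound term or name is transported along the swapping, using that
renaming commutes with substitution and with swappings.

Consequently every instance `(a b)·φ` in (1), (3) and (4) has the truth value of `φ`. The four
conditions then agree because `a` itself is not free in `Иa.φ`, so the quantifications in (1) and
(4) are not vacuous, and because each name sort has infinitely many names, so that in (3) the
exceptional set is either empty or infinite.
-/

/-!  Nominal logic programming: common infrastructure. -/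

noncomputable section
open scoped Classical
set_option linter.unusedVariables false
set_option linter.unreachableTactic false
set_option linter.unusedTactic false

/-- Sorts of a nominal signature: name sorts `ν`, data sorts `δ`,
and abstraction sorts `⟨ν⟩σ`. -/
inductive NomSort (N D : Type) : Type
  | name : N → NomSort N D
  | data : D → NomSort N D
  | nabs : N → NomSort N D → NomSort N D

/-- A nominal (many-sorted, first-order) signature. -/
structure NomSig : Type 1 where
  NSort : Type
  DSort : Type
  Func : Type
  Rel : Type
  fArgs : Func → List (NomSort NSort DSort)
  fRes : Func → DSort
  rArgs : Rel → List (NomSort NSort DSort)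

/-- Names: countably infinitely many for each name sort. -/
abbrev NomSig.Name (L : NomSig) : Type := L.NSort × ℕ

variable {L : NomSig}

/-- The transposition (a b) acting on names. -/
def swapName (a b c : L.Name) : L.Name :=
  if c = a then b else if c = b then a else c

/-- Nominal terms (possibly containing variables). -/
inductive Tm (L : NomSig) : Type
  | var : ℕ → Tm L
  | name : L.Name → Tm L
  | app : L.Func → List (Tm L) → Tm L
  | abs : L.Name → Tm L → Tm L

namespace Tm

/-- Apply a renaming of names to every name occurrence (including binding ones). -/
def rename (f : L.Name → L.Name) : Tm L → Tm L
  | var X => var X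
  | name c => name (f c)
  | app g ts => app g (ts.attach.map fun x => rename f x.1)
  | abs c t => abs (f c) (rename f t)
decreasing_by
  all_goals simp_wf
  all_goals first
    | (have := List.sizeOf_lt_of_mem x.2; omega)
    | omega

/-- The swapping `(a b)·t`. -/
def swap (a b : L.Name) (t : Tm L) : Tm L := t.rename (swapName a b)

/-- Apply a substitution of terms for variables. -/
def subst (θ : ℕ → Tm L) : Tm L → Tm L
  | var X => θ X
  | name c => name c
  | app g ts => app g (ts.attach.map fun x => subst θ x.1)
  | abs c t => abs c (subst θ t)
decreasing_by
  all_goals simp_wf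
  all_goals first
    | (have := List.sizeOf_lt_of_mem x.2; omega)
    | omega

/-- Syntactic free-name occurrence (a name occurring outside the scope of
an abstraction of the same name). -/
inductive FNa : L.Name → Tm L → Prop
  | name (a : L.Name) : FNa a (name a)
  | app (a : L.Name) (f : L.Func) (ts : List (Tm L)) (t : Tm L) :
      t ∈ ts → FNa a t → FNa a (app f ts)
  | abs (a b : L.Name) (t : Tm L) : a ≠ b → FNa a t → FNa a (abs b t)

/-- Free variable occurrence in a term. -/
inductive FVa : ℕ → Tm L → Prop
  | var (X : ℕ) : FVa X (var X)
  | app (X : ℕ) (f : L.Func) (ts : List (Tm L)) (t : Tm L) :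
      t ∈ ts → FVa X t → FVa X (app f ts)
  | abs (X : ℕ) (b : L.Name) (t : Tm L) : FVa X t → FVa X (abs b t)

end Tm

/-- The substitution `[t/X]`. -/
def substSingle (X : ℕ) (t : Tm L) : ℕ → Tm L := fun Y => if Y = X then t else Tm.var Y

/-- `IsTm t σ`: `t` is a well-sorted ground term of sort `σ`. -/
inductive IsTm : Tm L → NomSort L.NSort L.DSort → Prop
  | name (a : L.Name) : IsTm (Tm.name a) (NomSort.name a.1)
  | app (f : L.Func) (ts : List (Tm L)) :
      ts.length = (L.fArgs f).length →
      (∀ p ∈ ts.zip (L.fArgs f), IsTm p.1 p.2) →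
      IsTm (Tm.app f ts) (NomSort.data (L.fRes f))
  | abs (a : L.Name) (t : Tm L) (σ : NomSort L.NSort L.DSort) :
      IsTm t σ → IsTm (Tm.abs a t) (NomSort.nabs a.1 σ)

/-- Well-sortedness of a (possibly open) term relative to a sort
assignment `vs` for variables. -/
inductive TmS (vs : ℕ → NomSort L.NSort L.DSort) : Tm L → NomSort L.NSort L.DSort → Prop
  | var (X : ℕ) : TmS vs (Tm.var X) (vs X)
  | name (a : L.Name) : TmS vs (Tm.name a) (NomSort.name a.1)
  | app (f : L.Func) (ts : List (Tm L)) :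
      ts.length = (L.fArgs f).length →
      (∀ p ∈ ts.zip (L.fArgs f), TmS vs p.1 p.2) →
      TmS vs (Tm.app f ts) (NomSort.data (L.fRes f))
  | abs (a : L.Name) (t : Tm L) (σ : NomSort L.NSort L.DSort) :
      TmS vs t σ → TmS vs (Tm.abs a t) (NomSort.nabs a.1 σ)

/-- Freshness `a # t` on ground terms. -/
inductive Fresh : L.Name → Tm L → Prop
  | name (a b : L.Name) : a ≠ b → Fresh a (Tm.name b)
  | app (a : L.Name) (f : L.Func) (ts : List (Tm L)) :
      (∀ t ∈ ts, Fresh a t) → Fresh a (Tm.app f ts)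
  | absSame (a : L.Name) (t : Tm L) : Fresh a (Tm.abs a t)
  | absDiff (a b : L.Name) (t : Tm L) : a ≠ b → Fresh a t → Fresh a (Tm.abs b t)

/-- Alpha-equivalence `t ≈ u` on ground terms. -/
inductive Aeq : Tm L → Tm L → Prop
  | name (a : L.Name) : Aeq (Tm.name a) (Tm.name a)
  | app (f : L.Func) (ts us : List (Tm L)) :
      ts.length = us.length → (∀ p ∈ ts.zip us, Aeq p.1 p.2) →
      Aeq (Tm.app f ts) (Tm.app f us)
  | absSame (a : L.Name) (t u : Tm L) : Aeq t u → Aeq (Tm.abs a t) (Tm.abs a u)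
  | absDiff (a b : L.Name) (t u : Tm L) :
      Fresh a u → Aeq t (Tm.swap a b u) → Aeq (Tm.abs a t) (Tm.abs b u)

/-- The support of a ground term: the set of names not fresh for it. -/
def suppTm (t : Tm L) : Set L.Name := {a | ¬ Fresh a t}

/-- Finite sort-preserving bijections (permutations) of names. -/
def IsPerm (π : L.Name → L.Name) : Prop :=
  Function.Bijective π ∧ (∀ a, (π a).1 = a.1) ∧ {a | π a ≠ a}.Finite

/-- `t ∼ u`: equal up to a permutation of names. -/
def SimTm (t u : Tm L) : Prop := ∃ π, IsPerm π ∧ Aeq (t.rename π) u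

/-- Atomic formulas `p(t₁,…,tₙ)`. -/
structure NAtom (L : NomSig) : Type where
  rel : L.Rel
  args : List (Tm L)

def NAtom.rename (f : L.Name → L.Name) (A : NAtom L) : NAtom L :=
  ⟨A.rel, A.args.map (Tm.rename f)⟩

def NAtom.swap (a b : L.Name) (A : NAtom L) : NAtom L := A.rename (swapName a b)

def NAtom.subst (θ : ℕ → Tm L) (A : NAtom L) : NAtom L :=
  ⟨A.rel, A.args.map (Tm.subst θ)⟩

def NAtom.FNa (a : L.Name) (A : NAtom L) : Prop := ∃ t ∈ A.args, Tm.FNa a t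
def NAtom.FVa (X : ℕ) (A : NAtom L) : Prop := ∃ t ∈ A.args, Tm.FVa X t

/-- Alpha-equivalence of atoms. -/
def AtomAeq (A B : NAtom L) : Prop :=
  A.rel = B.rel ∧ A.args.length = B.args.length ∧ ∀ p ∈ A.args.zip B.args, Aeq p.1 p.2

/-- `A ∼ B` for atoms: equal up to a permutation of names. -/
def AtomSim (A B : NAtom L) : Prop := ∃ π, IsPerm π ∧ AtomAeq (A.rename π) B

/-- Well-sortedness of an atom relative to a variable sort assignment. -/
def AtomS (vs : ℕ → NomSort L.NSort L.DSort) (A : NAtom L) : Prop :=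
  A.args.length = (L.rArgs A.rel).length ∧ ∀ p ∈ A.args.zip (L.rArgs A.rel), TmS vs p.1 p.2

/-- The Herbrand base: all well-sorted ground atoms. -/
def BL (L : NomSig) : Set (NAtom L) :=
  {A | A.args.length = (L.rArgs A.rel).length ∧ ∀ p ∈ A.args.zip (L.rArgs A.rel), IsTm p.1 p.2}

/-- An equivariant set of atoms: closed under all same-sorted swappings. -/
def EquivariantSet (S : Set (NAtom L)) : Prop :=
  ∀ a b : L.Name, a.1 = b.1 → NAtom.swap a b '' S = S


/-! ### Constraints -/

/-- Constraints `C`. -/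
inductive NCon (L : NomSig) : Type
  | tt : NCon L
  | eq (t u : Tm L) : NCon L
  | fr (a : L.Name) (t : Tm L) : NCon L
  | sim (t u : Tm L) : NCon L
  | simA (A B : NAtom L) : NCon L
  | aeqA (A B : NAtom L) : NCon L
  | and (C C' : NCon L) : NCon L
  | ex (X : ℕ) (σ : NomSort L.NSort L.DSort) (C : NCon L) : NCon L
  | nu (a : L.Name) (C : NCon L) : NCon L

namespace NCon

def rename (f : L.Name → L.Name) : NCon L → NCon L
  | tt => tt
  | eq t u => eq (t.rename f) (u.rename f)
  | fr a t => fr (f a) (t.rename f)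
  | sim t u => sim (t.rename f) (u.rename f)
  | simA A B => simA (A.rename f) (B.rename f)
  | aeqA A B => aeqA (A.rename f) (B.rename f)
  | and C C' => and (rename f C) (rename f C')
  | ex X σ C => ex X σ (rename f C)
  | nu a C => nu (f a) (rename f C)

/-- Swapping `(a b)·C`, acting on all names (bound names included). -/
def swap (a b : L.Name) (C : NCon L) : NCon L := C.rename (swapName a b)

def subst (θ : ℕ → Tm L) : NCon L → NCon L
  | tt => tt
  | eq t u => eq (t.subst θ) (u.subst θ)
  | fr a t => fr a (t.subst θ)
  | sim t u => sim (t.subst θ) (u.subst θ)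
  | simA A B => simA (A.subst θ) (B.subst θ)
  | aeqA A B => aeqA (A.subst θ) (B.subst θ)
  | and C C' => and (subst θ C) (subst θ C')
  | ex X σ C => ex X σ (subst (Function.update θ X (Tm.var X)) C)
  | nu a C => nu a (subst θ C)

def size : NCon L → ℕ
  | and C C' => size C + size C' + 1
  | ex _ _ C => size C + 1
  | nu _ C => size C + 1
  | _ => 1

@[simp] theorem size_rename (f : L.Name → L.Name) :
    ∀ C : NCon L, (C.rename f).size = C.size := by
  intro C; induction C <;> simp [rename, size, *]

@[simp] theorem size_swap (a b : L.Name) (C : NCon L) : (C.swap a b).size = C.size :=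
  size_rename _ C

@[simp] theorem size_subst :
    ∀ (C : NCon L) (θ : ℕ → Tm L), (C.subst θ).size = C.size := by
  intro C; induction C <;> intro θ <;> simp [subst, size, *]

/-- Free names of a constraint. -/
inductive FNa : L.Name → NCon L → Prop
  | eq₁ (a : L.Name) (t u : Tm L) : Tm.FNa a t → FNa a (eq t u)
  | eq₂ (a : L.Name) (t u : Tm L) : Tm.FNa a u → FNa a (eq t u)
  | frN (a : L.Name) (t : Tm L) : FNa a (fr a t)
  | frT (a c : L.Name) (t : Tm L) : Tm.FNa a t → FNa a (fr c t)
  | sim₁ (a : L.Name) (t u : Tm L) : Tm.FNa a t → FNa a (sim t u)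
  | sim₂ (a : L.Name) (t u : Tm L) : Tm.FNa a u → FNa a (sim t u)
  | simA₁ (a : L.Name) (A B : NAtom L) : NAtom.FNa a A → FNa a (simA A B)
  | simA₂ (a : L.Name) (A B : NAtom L) : NAtom.FNa a B → FNa a (simA A B)
  | aeqA₁ (a : L.Name) (A B : NAtom L) : NAtom.FNa a A → FNa a (aeqA A B)
  | aeqA₂ (a : L.Name) (A B : NAtom L) : NAtom.FNa a B → FNa a (aeqA A B)
  | and₁ (a : L.Name) (C C' : NCon L) : FNa a C → FNa a (and C C')
  | and₂ (a : L.Name) (C C' : NCon L) : FNa a C' → FNa a (and C C')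
  | ex (a : L.Name) (X : ℕ) (σ : NomSort L.NSort L.DSort) (C : NCon L) :
      FNa a C → FNa a (ex X σ C)
  | nu (a c : L.Name) (C : NCon L) : a ≠ c → FNa a C → FNa a (nu c C)

/-- Free variables of a constraint. -/
inductive FVa : ℕ → NCon L → Prop
  | eq₁ (X : ℕ) (t u : Tm L) : Tm.FVa X t → FVa X (eq t u)
  | eq₂ (X : ℕ) (t u : Tm L) : Tm.FVa X u → FVa X (eq t u)
  | frT (X : ℕ) (c : L.Name) (t : Tm L) : Tm.FVa X t → FVa X (fr c t)
  | sim₁ (X : ℕ) (t u : Tm L) : Tm.FVa X t → FVa X (sim t u)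
  | sim₂ (X : ℕ) (t u : Tm L) : Tm.FVa X u → FVa X (sim t u)
  | simA₁ (X : ℕ) (A B : NAtom L) : NAtom.FVa X A → FVa X (simA A B)
  | simA₂ (X : ℕ) (A B : NAtom L) : NAtom.FVa X B → FVa X (simA A B)
  | aeqA₁ (X : ℕ) (A B : NAtom L) : NAtom.FVa X A → FVa X (aeqA A B)
  | aeqA₂ (X : ℕ) (A B : NAtom L) : NAtom.FVa X B → FVa X (aeqA A B)
  | and₁ (X : ℕ) (C C' : NCon L) : FVa X C → FVa X (and C C')
  | and₂ (X : ℕ) (C C' : NCon L) : FVa X C' → FVa X (and C C')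
  | ex (X X' : ℕ) (σ : NomSort L.NSort L.DSort) (C : NCon L) :
      X ≠ X' → FVa X C → FVa X (ex X' σ C)
  | nu (X : ℕ) (c : L.Name) (C : NCon L) : FVa X C → FVa X (nu c C)

/-- Well-sortedness of a constraint relative to a variable sort assignment. -/
def WS (vs : ℕ → NomSort L.NSort L.DSort) : NCon L → Prop
  | tt => True
  | eq t u => ∃ σ, TmS vs t σ ∧ TmS vs u σ
  | fr _ t => ∃ σ, TmS vs t σ
  | sim t u => ∃ σ, TmS vs t σ ∧ TmS vs u σ
  | simA A B => AtomS vs A ∧ AtomS vs B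
  | aeqA A B => AtomS vs A ∧ AtomS vs B
  | and C C' => WS vs C ∧ WS vs C'
  | ex X σ C => WS (Function.update vs X σ) C
  | nu _ C => WS vs C

end NCon

/-- Satisfaction `⊨ C` of a (closed) constraint. -/
def ConSat : NCon L → Prop
  | NCon.tt => True
  | NCon.eq t u => Aeq t u
  | NCon.fr a t => Fresh a t
  | NCon.sim t u => SimTm t u
  | NCon.simA A B => AtomSim A B
  | NCon.aeqA A B => AtomAeq A B
  | NCon.and C C' => ConSat C ∧ ConSat C'
  | NCon.ex X σ C => ∃ t : Tm L, IsTm t σ ∧ ConSat (C.subst (substSingle X t))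
  | NCon.nu a C => ∀ b : L.Name, b.1 = a.1 → ¬ NCon.FNa b (NCon.nu a C) → ConSat (C.swap b a)
termination_by C => C.size
decreasing_by all_goals (simp [NCon.size]; try omega)
/-! ### Goals -/

/-- Goal formulas `G`. -/
inductive NGoal (L : NomSig) : Type
  | tt : NGoal L
  | atom (A : NAtom L) : NGoal L
  | con (C : NCon L) : NGoal L
  | and (G G' : NGoal L) : NGoal L
  | or (G G' : NGoal L) : NGoal L
  | ex (X : ℕ) (σ : NomSort L.NSort L.DSort) (G : NGoal L) : NGoal L
  | nu (a : L.Name) (G : NGoal L) : NGoal L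

namespace NGoal

def rename (f : L.Name → L.Name) : NGoal L → NGoal L
  | tt => tt
  | atom A => atom (A.rename f)
  | con C => con (C.rename f)
  | and G G' => and (rename f G) (rename f G')
  | or G G' => or (rename f G) (rename f G')
  | ex X σ G => ex X σ (rename f G)
  | nu a G => nu (f a) (rename f G)

def swap (a b : L.Name) (G : NGoal L) : NGoal L := G.rename (swapName a b)

def subst (θ : ℕ → Tm L) : NGoal L → NGoal L
  | tt => tt
  | atom A => atom (A.subst θ)
  | con C => con (C.subst θ)
  | and G G' => and (subst θ G) (subst θ G')
  | or G G' => or (subst θ G) (subst θ G')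
  | ex X σ G => ex X σ (subst (Function.update θ X (Tm.var X)) G)
  | nu a G => nu a (subst θ G)

def size : NGoal L → ℕ
  | and G G' => size G + size G' + 1
  | or G G' => size G + size G' + 1
  | ex _ _ G => size G + 1
  | nu _ G => size G + 1
  | _ => 1

@[simp] theorem size_rename (f : L.Name → L.Name) :
    ∀ G : NGoal L, (G.rename f).size = G.size := by
  intro G; induction G <;> simp [rename, size, *]

@[simp] theorem size_swap (a b : L.Name) (G : NGoal L) : (G.swap a b).size = G.size :=
  size_rename _ G

@[simp] theorem size_subst :
    ∀ (G : NGoal L) (θ : ℕ → Tm L), (G.subst θ).size = G.size := by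
  intro G; induction G <;> intro θ <;> simp [subst, size, *]

/-- Free names of a goal. -/
inductive FNa : L.Name → NGoal L → Prop
  | atom (a : L.Name) (A : NAtom L) : NAtom.FNa a A → FNa a (atom A)
  | con (a : L.Name) (C : NCon L) : NCon.FNa a C → FNa a (con C)
  | and₁ (a : L.Name) (G G' : NGoal L) : FNa a G → FNa a (and G G')
  | and₂ (a : L.Name) (G G' : NGoal L) : FNa a G' → FNa a (and G G')
  | or₁ (a : L.Name) (G G' : NGoal L) : FNa a G → FNa a (or G G')
  | or₂ (a : L.Name) (G G' : NGoal L) : FNa a G' → FNa a (or G G')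
  | ex (a : L.Name) (X : ℕ) (σ : NomSort L.NSort L.DSort) (G : NGoal L) :
      FNa a G → FNa a (ex X σ G)
  | nu (a c : L.Name) (G : NGoal L) : a ≠ c → FNa a G → FNa a (nu c G)

/-- Free variables of a goal. -/
inductive FVa : ℕ → NGoal L → Prop
  | atom (X : ℕ) (A : NAtom L) : NAtom.FVa X A → FVa X (atom A)
  | con (X : ℕ) (C : NCon L) : NCon.FVa X C → FVa X (con C)
  | and₁ (X : ℕ) (G G' : NGoal L) : FVa X G → FVa X (and G G')
  | and₂ (X : ℕ) (G G' : NGoal L) : FVa X G' → FVa X (and G G')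
  | or₁ (X : ℕ) (G G' : NGoal L) : FVa X G → FVa X (or G G')
  | or₂ (X : ℕ) (G G' : NGoal L) : FVa X G' → FVa X (or G G')
  | ex (X X' : ℕ) (σ : NomSort L.NSort L.DSort) (G : NGoal L) :
      X ≠ X' → FVa X G → FVa X (ex X' σ G)
  | nu (X : ℕ) (c : L.Name) (G : NGoal L) : FVa X G → FVa X (nu c G)

/-- Well-sortedness of a goal relative to a variable sort assignment. -/
def WS (vs : ℕ → NomSort L.NSort L.DSort) : NGoal L → Prop
  | tt => True
  | atom A => AtomS vs A
  | con C => NCon.WS vs C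
  | and G G' => WS vs G ∧ WS vs G'
  | or G G' => WS vs G ∧ WS vs G'
  | ex X σ G => WS (Function.update vs X σ) G
  | nu _ G => WS vs G

end NGoal

/-- Satisfaction `S ⊨ G` of a (closed) goal by a Herbrand interpretation. -/
def GoalSat (S : Set (NAtom L)) : NGoal L → Prop
  | NGoal.tt => True
  | NGoal.atom A => A ∈ S
  | NGoal.con C => ConSat C
  | NGoal.and G G' => GoalSat S G ∧ GoalSat S G'
  | NGoal.or G G' => GoalSat S G ∨ GoalSat S G'
  | NGoal.ex X σ G => ∃ t : Tm L, IsTm t σ ∧ GoalSat S (G.subst (substSingle X t))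
  | NGoal.nu a G => ∀ b : L.Name, b.1 = a.1 → ¬ NGoal.FNa b (NGoal.nu a G) →
      GoalSat S (G.swap b a)
termination_by G => G.size
decreasing_by all_goals (simp [NGoal.size]; try omega)

/-! ### Program clauses -/

/-- Program clauses `D`. -/
inductive NCl (L : NomSig) : Type
  | tt : NCl L
  | atom (A : NAtom L) : NCl L
  | and (D D' : NCl L) : NCl L
  | imp (G : NGoal L) (D : NCl L) : NCl L
  | all (X : ℕ) (σ : NomSort L.NSort L.DSort) (D : NCl L) : NCl L
  | nu (a : L.Name) (D : NCl L) : NCl L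

namespace NCl

def rename (f : L.Name → L.Name) : NCl L → NCl L
  | tt => tt
  | atom A => atom (A.rename f)
  | and D D' => and (rename f D) (rename f D')
  | imp G D => imp (G.rename f) (rename f D)
  | all X σ D => all X σ (rename f D)
  | nu a D => nu (f a) (rename f D)

def swap (a b : L.Name) (D : NCl L) : NCl L := D.rename (swapName a b)

def subst (θ : ℕ → Tm L) : NCl L → NCl L
  | tt => tt
  | atom A => atom (A.subst θ)
  | and D D' => and (subst θ D) (subst θ D')
  | imp G D => imp (G.subst θ) (subst θ D)
  | all X σ D => all X σ (subst (Function.update θ X (Tm.var X)) D)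
  | nu a D => nu a (subst θ D)

def size : NCl L → ℕ
  | and D D' => size D + size D' + 1
  | imp _ D => size D + 1
  | all _ _ D => size D + 1
  | nu _ D => size D + 1
  | _ => 1

@[simp] theorem size_rename (f : L.Name → L.Name) :
    ∀ D : NCl L, (D.rename f).size = D.size := by
  intro D; induction D <;> simp [rename, size, *]

@[simp] theorem size_swap (a b : L.Name) (D : NCl L) : (D.swap a b).size = D.size :=
  size_rename _ D

@[simp] theorem size_subst :
    ∀ (D : NCl L) (θ : ℕ → Tm L), (D.subst θ).size = D.size := by
  intro D; induction D <;> intro θ <;> simp [subst, size, *]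

/-- Free names of a program clause. -/
inductive FNa : L.Name → NCl L → Prop
  | atom (a : L.Name) (A : NAtom L) : NAtom.FNa a A → FNa a (atom A)
  | and₁ (a : L.Name) (D D' : NCl L) : FNa a D → FNa a (and D D')
  | and₂ (a : L.Name) (D D' : NCl L) : FNa a D' → FNa a (and D D')
  | imp₁ (a : L.Name) (G : NGoal L) (D : NCl L) : NGoal.FNa a G → FNa a (imp G D)
  | imp₂ (a : L.Name) (G : NGoal L) (D : NCl L) : FNa a D → FNa a (imp G D)
  | all (a : L.Name) (X : ℕ) (σ : NomSort L.NSort L.DSort) (D : NCl L) :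
      FNa a D → FNa a (all X σ D)
  | nu (a c : L.Name) (D : NCl L) : a ≠ c → FNa a D → FNa a (nu c D)

/-- Free variables of a program clause. -/
inductive FVa : ℕ → NCl L → Prop
  | atom (X : ℕ) (A : NAtom L) : NAtom.FVa X A → FVa X (atom A)
  | and₁ (X : ℕ) (D D' : NCl L) : FVa X D → FVa X (and D D')
  | and₂ (X : ℕ) (D D' : NCl L) : FVa X D' → FVa X (and D D')
  | imp₁ (X : ℕ) (G : NGoal L) (D : NCl L) : NGoal.FVa X G → FVa X (imp G D)
  | imp₂ (X : ℕ) (G : NGoal L) (D : NCl L) : FVa X D → FVa X (imp G D)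
  | all (X X' : ℕ) (σ : NomSort L.NSort L.DSort) (D : NCl L) :
      X ≠ X' → FVa X D → FVa X (all X' σ D)
  | nu (X : ℕ) (c : L.Name) (D : NCl L) : FVa X D → FVa X (nu c D)

/-- Well-sortedness of a program clause relative to a variable sort assignment. -/
def WS (vs : ℕ → NomSort L.NSort L.DSort) : NCl L → Prop
  | tt => True
  | atom A => AtomS vs A
  | and D D' => WS vs D ∧ WS vs D'
  | imp G D => NGoal.WS vs G ∧ WS vs D
  | all X σ D => WS (Function.update vs X σ) D
  | nu _ D => WS vs D

/-- A clause with no free variables. -/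
def ClosedV (D : NCl L) : Prop := ∀ X : ℕ, ¬ FVa X D

/-- A clause with no free names. -/
def ClosedN (D : NCl L) : Prop := ∀ a : L.Name, ¬ FNa a D

/-- И-goal clauses: no И-quantified clause subformulas (goals may contain И). -/
inductive NuGoal : NCl L → Prop
  | tt : NuGoal tt
  | atom (A : NAtom L) : NuGoal (atom A)
  | and (D D' : NCl L) : NuGoal D → NuGoal D' → NuGoal (and D D')
  | imp (G : NGoal L) (D : NCl L) : NuGoal D → NuGoal (imp G D)
  | all (X : ℕ) (σ : NomSort L.NSort L.DSort) (D : NCl L) : NuGoal D → NuGoal (all X σ D)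

end NCl

/-- Satisfaction `S ⊨ D` of a (closed) program clause. -/
def ClSat (S : Set (NAtom L)) : NCl L → Prop
  | NCl.tt => True
  | NCl.atom A => A ∈ S
  | NCl.and D D' => ClSat S D ∧ ClSat S D'
  | NCl.imp G D => GoalSat S G → ClSat S D
  | NCl.all X σ D => ∀ t : Tm L, IsTm t σ → ClSat S (D.subst (substSingle X t))
  | NCl.nu a D => ∀ b : L.Name, b.1 = a.1 → ¬ NCl.FNa b (NCl.nu a D) →
      ClSat S (D.swap b a)
termination_by D => D.size
decreasing_by all_goals (simp [NCl.size]; try omega)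
/-! ### General first-order nominal formulas -/

/-- Formulas of nominal logic. -/
inductive NFm (L : NomSig) : Type
  | tt : NFm L
  | ff : NFm L
  | atom (A : NAtom L) : NFm L
  | eq (t u : Tm L) : NFm L
  | fr (a : L.Name) (t : Tm L) : NFm L
  | sim (t u : Tm L) : NFm L
  | imp (φ ψ : NFm L) : NFm L
  | and (φ ψ : NFm L) : NFm L
  | or (φ ψ : NFm L) : NFm L
  | all (X : ℕ) (σ : NomSort L.NSort L.DSort) (φ : NFm L) : NFm L
  | ex (X : ℕ) (σ : NomSort L.NSort L.DSort) (φ : NFm L) : NFm L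
  | nu (a : L.Name) (φ : NFm L) : NFm L

namespace NFm

def rename (f : L.Name → L.Name) : NFm L → NFm L
  | tt => tt
  | ff => ff
  | atom A => atom (A.rename f)
  | eq t u => eq (t.rename f) (u.rename f)
  | fr a t => fr (f a) (t.rename f)
  | sim t u => sim (t.rename f) (u.rename f)
  | imp φ ψ => imp (rename f φ) (rename f ψ)
  | and φ ψ => and (rename f φ) (rename f ψ)
  | or φ ψ => or (rename f φ) (rename f ψ)
  | all X σ φ => all X σ (rename f φ)
  | ex X σ φ => ex X σ (rename f φ)
  | nu a φ => nu (f a) (rename f φ)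

/-- Swapping `(a b)·φ`. -/
def swap (a b : L.Name) (φ : NFm L) : NFm L := φ.rename (swapName a b)

def subst (θ : ℕ → Tm L) : NFm L → NFm L
  | tt => tt
  | ff => ff
  | atom A => atom (A.subst θ)
  | eq t u => eq (t.subst θ) (u.subst θ)
  | fr a t => fr a (t.subst θ)
  | sim t u => sim (t.subst θ) (u.subst θ)
  | imp φ ψ => imp (subst θ φ) (subst θ ψ)
  | and φ ψ => and (subst θ φ) (subst θ ψ)
  | or φ ψ => or (subst θ φ) (subst θ ψ)
  | all X σ φ => all X σ (subst (Function.update θ X (Tm.var X)) φ)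
  | ex X σ φ => ex X σ (subst (Function.update θ X (Tm.var X)) φ)
  | nu a φ => nu a (subst θ φ)

def size : NFm L → ℕ
  | imp φ ψ => size φ + size ψ + 1
  | and φ ψ => size φ + size ψ + 1
  | or φ ψ => size φ + size ψ + 1
  | all _ _ φ => size φ + 1
  | ex _ _ φ => size φ + 1
  | nu _ φ => size φ + 1
  | _ => 1

@[simp] theorem size_rename (f : L.Name → L.Name) :
    ∀ φ : NFm L, (φ.rename f).size = φ.size := by
  intro φ; induction φ <;> simp [rename, size, *]

@[simp] theorem size_swap (a b : L.Name) (φ : NFm L) : (φ.swap a b).size = φ.size :=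
  size_rename _ φ

@[simp] theorem size_subst :
    ∀ (φ : NFm L) (θ : ℕ → Tm L), (φ.subst θ).size = φ.size := by
  intro φ; induction φ <;> intro θ <;> simp [subst, size, *]

/-- Free names of a formula. -/
inductive FNa : L.Name → NFm L → Prop
  | atom (a : L.Name) (A : NAtom L) : NAtom.FNa a A → FNa a (atom A)
  | eq₁ (a : L.Name) (t u : Tm L) : Tm.FNa a t → FNa a (eq t u)
  | eq₂ (a : L.Name) (t u : Tm L) : Tm.FNa a u → FNa a (eq t u)
  | frN (a : L.Name) (t : Tm L) : FNa a (fr a t)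
  | frT (a c : L.Name) (t : Tm L) : Tm.FNa a t → FNa a (fr c t)
  | sim₁ (a : L.Name) (t u : Tm L) : Tm.FNa a t → FNa a (sim t u)
  | sim₂ (a : L.Name) (t u : Tm L) : Tm.FNa a u → FNa a (sim t u)
  | imp₁ (a : L.Name) (φ ψ : NFm L) : FNa a φ → FNa a (imp φ ψ)
  | imp₂ (a : L.Name) (φ ψ : NFm L) : FNa a ψ → FNa a (imp φ ψ)
  | and₁ (a : L.Name) (φ ψ : NFm L) : FNa a φ → FNa a (and φ ψ)
  | and₂ (a : L.Name) (φ ψ : NFm L) : FNa a ψ → FNa a (and φ ψ)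
  | or₁ (a : L.Name) (φ ψ : NFm L) : FNa a φ → FNa a (or φ ψ)
  | or₂ (a : L.Name) (φ ψ : NFm L) : FNa a ψ → FNa a (or φ ψ)
  | all (a : L.Name) (X : ℕ) (σ : NomSort L.NSort L.DSort) (φ : NFm L) :
      FNa a φ → FNa a (all X σ φ)
  | ex (a : L.Name) (X : ℕ) (σ : NomSort L.NSort L.DSort) (φ : NFm L) :
      FNa a φ → FNa a (ex X σ φ)
  | nu (a c : L.Name) (φ : NFm L) : a ≠ c → FNa a φ → FNa a (nu c φ)

/-- Free variables of a formula. -/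
inductive FVa : ℕ → NFm L → Prop
  | atom (X : ℕ) (A : NAtom L) : NAtom.FVa X A → FVa X (atom A)
  | eq₁ (X : ℕ) (t u : Tm L) : Tm.FVa X t → FVa X (eq t u)
  | eq₂ (X : ℕ) (t u : Tm L) : Tm.FVa X u → FVa X (eq t u)
  | frT (X : ℕ) (c : L.Name) (t : Tm L) : Tm.FVa X t → FVa X (fr c t)
  | sim₁ (X : ℕ) (t u : Tm L) : Tm.FVa X t → FVa X (sim t u)
  | sim₂ (X : ℕ) (t u : Tm L) : Tm.FVa X u → FVa X (sim t u)
  | imp₁ (X : ℕ) (φ ψ : NFm L) : FVa X φ → FVa X (imp φ ψ)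
  | imp₂ (X : ℕ) (φ ψ : NFm L) : FVa X ψ → FVa X (imp φ ψ)
  | and₁ (X : ℕ) (φ ψ : NFm L) : FVa X φ → FVa X (and φ ψ)
  | and₂ (X : ℕ) (φ ψ : NFm L) : FVa X ψ → FVa X (and φ ψ)
  | or₁ (X : ℕ) (φ ψ : NFm L) : FVa X φ → FVa X (or φ ψ)
  | or₂ (X : ℕ) (φ ψ : NFm L) : FVa X ψ → FVa X (or φ ψ)
  | all (X X' : ℕ) (σ : NomSort L.NSort L.DSort) (φ : NFm L) :
      X ≠ X' → FVa X φ → FVa X (all X' σ φ)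
  | ex (X X' : ℕ) (σ : NomSort L.NSort L.DSort) (φ : NFm L) :
      X ≠ X' → FVa X φ → FVa X (ex X' σ φ)
  | nu (X : ℕ) (c : L.Name) (φ : NFm L) : FVa X φ → FVa X (nu c φ)

end NFm

/-- Satisfaction `S ⊨ φ` of a (closed) formula by a Herbrand interpretation. -/
def FmSat (S : Set (NAtom L)) : NFm L → Prop
  | NFm.tt => True
  | NFm.ff => False
  | NFm.atom A => A ∈ S
  | NFm.eq t u => Aeq t u
  | NFm.fr a t => Fresh a t
  | NFm.sim t u => SimTm t u
  | NFm.imp φ ψ => FmSat S φ → FmSat S ψ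
  | NFm.and φ ψ => FmSat S φ ∧ FmSat S ψ
  | NFm.or φ ψ => FmSat S φ ∨ FmSat S ψ
  | NFm.all X σ φ => ∀ t : Tm L, IsTm t σ → FmSat S (φ.subst (substSingle X t))
  | NFm.ex X σ φ => ∃ t : Tm L, IsTm t σ ∧ FmSat S (φ.subst (substSingle X t))
  | NFm.nu a φ => ∀ b : L.Name, b.1 = a.1 → ¬ NFm.FNa b (NFm.nu a φ) →
      FmSat S (φ.swap b a)
termination_by φ => φ.size
decreasing_by all_goals (simp [NFm.size]; try omega)
/-! ### Herbrand models and the one-step deduction operator -/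

/-- A Herbrand model of a set of (closed) program clauses: an equivariant
subset of the Herbrand base satisfying every clause. -/
def IsHModel (Δ : Set (NCl L)) (H : Set (NAtom L)) : Prop :=
  H ⊆ BL L ∧ EquivariantSet H ∧ ∀ D ∈ Δ, ClSat H D

/-- The one-step deduction operator `T_D`. -/
def TOp : NCl L → Set (NAtom L) → Set (NAtom L)
  | NCl.tt, S => S
  | NCl.atom A, S => S ∪ {A}
  | NCl.and D D', S => TOp D S ∪ TOp D' S
  | NCl.imp G D, S => if GoalSat S G then TOp D S else S
  | NCl.all X σ D, S => ⋃ (t : Tm L) (_ : IsTm t σ), TOp (D.subst (substSingle X t)) S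
  | NCl.nu a D, S =>
      ⋃ (b : L.Name) (_ : b.1 = a.1 ∧ ¬ NCl.FNa b (NCl.nu a D)), TOp (D.swap a b) S
termination_by D _ => D.size
decreasing_by all_goals (simp [NCl.size]; try omega)

/-- The one-step deduction operator `T_Δ` of a (nonempty) program
`Δ = {D₁,…,Dₙ}`, i.e. `T_{D₁ ∧ ⋯ ∧ Dₙ}`. -/
def TProg (Δ : Set (NCl L)) (S : Set (NAtom L)) : Set (NAtom L) :=
  ⋃ D ∈ Δ, TOp D S

/-! ### Contexts, substitutions and constraint entailment -/

/-- Context bindings: variable bindings `X:σ` and name bindings `#a:ν`. -/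
inductive CtxBind (L : NomSig) : Type
  | v (X : ℕ) (σ : NomSort L.NSort L.DSort) : CtxBind L
  | n (a : L.Name) : CtxBind L

/-- Contexts, as lists of bindings with the *most recent binding first*. -/
abbrev Ctxx (L : NomSig) : Type := List (CtxBind L)

/-- The variables declared in a context. -/
def ctxVars : Ctxx L → Set ℕ
  | [] => ∅
  | CtxBind.v X _ :: Ξ => insert X (ctxVars Ξ)
  | CtxBind.n _ :: Ξ => ctxVars Ξ

/-- The names declared in a context. -/
def ctxNames : Ctxx L → Set L.Name
  | [] => ∅
  | CtxBind.v _ _ :: Ξ => ctxNames Ξ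
  | CtxBind.n a :: Ξ => insert a (ctxNames Ξ)

def CtxBind.key : CtxBind L → ℕ ⊕ L.Name
  | v X _ => Sum.inl X
  | n a => Sum.inr a

/-- All bindings of a context are distinct. -/
def CtxWF (Ξ : Ctxx L) : Prop := Ξ.Pairwise (fun b c => b.key ≠ c.key)

/-- `θ : Σ`: the ground substitution `θ` satisfies the context `Σ`. -/
def SubstOk : Ctxx L → (ℕ → Tm L) → Prop
  | [], _ => True
  | CtxBind.v X σ :: Ξ, θ => IsTm (θ X) σ ∧ SubstOk Ξ θ
  | CtxBind.n a :: Ξ, θ => (∀ X ∈ ctxVars Ξ, Fresh a (θ X)) ∧ SubstOk Ξ θ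

/-- `θ` satisfies every constraint in `∇`. -/
def SatAll (θ : ℕ → Tm L) (Φ : Finset (NCon L)) : Prop :=
  ∀ C ∈ Φ, ConSat (C.subst θ)

/-- Constraint entailment `Σ;∇ ⊨ C`. -/
def EntC (Ξ : Ctxx L) (Φ : Finset (NCon L)) (C : NCon L) : Prop :=
  ∀ θ : ℕ → Tm L, SubstOk Ξ θ → SatAll θ Φ → ConSat (C.subst θ)

/-- The free variables and names of a constraint are declared in `Σ`. -/
def ConDecl (Ξ : Ctxx L) (C : NCon L) : Prop :=
  (∀ X, NCon.FVa X C → X ∈ ctxVars Ξ) ∧ (∀ a, NCon.FNa a C → a ∈ ctxNames Ξ)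

/-- The free variables and names of a goal are declared in `Σ`. -/
def GoalDecl (Ξ : Ctxx L) (G : NGoal L) : Prop :=
  (∀ X, NGoal.FVa X G → X ∈ ctxVars Ξ) ∧ (∀ a, NGoal.FNa a G → a ∈ ctxNames Ξ)

/-- The free variables and names of a program clause are declared in `Σ`. -/
def ClDecl (Ξ : Ctxx L) (D : NCl L) : Prop :=
  (∀ X, NCl.FVa X D → X ∈ ctxVars Ξ) ∧ (∀ a, NCl.FNa a D → a ∈ ctxNames Ξ)

/-- The free variables and names of an atom are declared in `Σ`. -/
def AtomDecl (Ξ : Ctxx L) (A : NAtom L) : Prop :=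
  (∀ X, NAtom.FVa X A → X ∈ ctxVars Ξ) ∧ (∀ a, NAtom.FNa a A → a ∈ ctxNames Ξ)

/-! ### Uniform / focused proof search -/

mutual
/-- Uniform derivability `Σ;Δ;∇ ⟶ G`. -/
inductive UD (Δ : Set (NCl L)) : Ctxx L → Finset (NCon L) → NGoal L → Prop
  | top (Ξ : Ctxx L) (Φ : Finset (NCon L)) : UD Δ Ξ Φ NGoal.tt
  | con (Ξ : Ctxx L) (Φ : Finset (NCon L)) (C : NCon L) :
      EntC Ξ Φ C → UD Δ Ξ Φ (NGoal.con C)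
  | andR (Ξ : Ctxx L) (Φ : Finset (NCon L)) (G₁ G₂ : NGoal L) :
      UD Δ Ξ Φ G₁ → UD Δ Ξ Φ G₂ → UD Δ Ξ Φ (NGoal.and G₁ G₂)
  | orR₁ (Ξ : Ctxx L) (Φ : Finset (NCon L)) (G₁ G₂ : NGoal L) :
      UD Δ Ξ Φ G₁ → UD Δ Ξ Φ (NGoal.or G₁ G₂)
  | orR₂ (Ξ : Ctxx L) (Φ : Finset (NCon L)) (G₁ G₂ : NGoal L) :
      UD Δ Ξ Φ G₂ → UD Δ Ξ Φ (NGoal.or G₁ G₂)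
  | exR (Ξ : Ctxx L) (Φ : Finset (NCon L)) (X : ℕ) (σ : NomSort L.NSort L.DSort)
      (C : NCon L) (G : NGoal L) :
      EntC Ξ Φ (NCon.ex X σ C) → UD Δ (CtxBind.v X σ :: Ξ) (insert C Φ) G →
      UD Δ Ξ Φ (NGoal.ex X σ G)
  | nuR (Ξ : Ctxx L) (Φ : Finset (NCon L)) (a : L.Name) (C : NCon L) (G : NGoal L) :
      EntC Ξ Φ (NCon.nu a C) → UD Δ (CtxBind.n a :: Ξ) (insert C Φ) G →
      UD Δ Ξ Φ (NGoal.nu a G)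
  | sel (Ξ : Ctxx L) (Φ : Finset (NCon L)) (D : NCl L) (A : NAtom L) :
      D ∈ Δ → FD Δ Ξ Φ D A → UD Δ Ξ Φ (NGoal.atom A)

/-- Focused derivability `Σ;Δ;∇ ⟶ [D] ⇒ A`. -/
inductive FD (Δ : Set (NCl L)) : Ctxx L → Finset (NCon L) → NCl L → NAtom L → Prop
  | hyp (Ξ : Ctxx L) (Φ : Finset (NCon L)) (A' A : NAtom L) :
      EntC Ξ Φ (NCon.simA A' A) → FD Δ Ξ Φ (NCl.atom A') A
  | andL₁ (Ξ : Ctxx L) (Φ : Finset (NCon L)) (D₁ D₂ : NCl L) (A : NAtom L) :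
      FD Δ Ξ Φ D₁ A → FD Δ Ξ Φ (NCl.and D₁ D₂) A
  | andL₂ (Ξ : Ctxx L) (Φ : Finset (NCon L)) (D₁ D₂ : NCl L) (A : NAtom L) :
      FD Δ Ξ Φ D₂ A → FD Δ Ξ Φ (NCl.and D₁ D₂) A
  | impL (Ξ : Ctxx L) (Φ : Finset (NCon L)) (G : NGoal L) (D : NCl L) (A : NAtom L) :
      FD Δ Ξ Φ D A → UD Δ Ξ Φ G → FD Δ Ξ Φ (NCl.imp G D) A
  | allL (Ξ : Ctxx L) (Φ : Finset (NCon L)) (X : ℕ) (σ : NomSort L.NSort L.DSort)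
      (C : NCon L) (D : NCl L) (A : NAtom L) :
      EntC Ξ Φ (NCon.ex X σ C) → FD Δ (CtxBind.v X σ :: Ξ) (insert C Φ) D A →
      FD Δ Ξ Φ (NCl.all X σ D) A
  | nuL (Ξ : Ctxx L) (Φ : Finset (NCon L)) (a : L.Name) (C : NCon L) (D : NCl L)
      (A : NAtom L) :
      EntC Ξ Φ (NCon.nu a C) → FD Δ (CtxBind.n a :: Ξ) (insert C Φ) D A →
      FD Δ Ξ Φ (NCl.nu a D) A
end

mutual
/-- Uniform derivability for ≈-resolution, `Σ;Δ;∇ ⟶≈ G`. -/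
inductive UDe (Δ : Set (NCl L)) : Ctxx L → Finset (NCon L) → NGoal L → Prop
  | top (Ξ : Ctxx L) (Φ : Finset (NCon L)) : UDe Δ Ξ Φ NGoal.tt
  | con (Ξ : Ctxx L) (Φ : Finset (NCon L)) (C : NCon L) :
      EntC Ξ Φ C → UDe Δ Ξ Φ (NGoal.con C)
  | andR (Ξ : Ctxx L) (Φ : Finset (NCon L)) (G₁ G₂ : NGoal L) :
      UDe Δ Ξ Φ G₁ → UDe Δ Ξ Φ G₂ → UDe Δ Ξ Φ (NGoal.and G₁ G₂)
  | orR₁ (Ξ : Ctxx L) (Φ : Finset (NCon L)) (G₁ G₂ : NGoal L) :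
      UDe Δ Ξ Φ G₁ → UDe Δ Ξ Φ (NGoal.or G₁ G₂)
  | orR₂ (Ξ : Ctxx L) (Φ : Finset (NCon L)) (G₁ G₂ : NGoal L) :
      UDe Δ Ξ Φ G₂ → UDe Δ Ξ Φ (NGoal.or G₁ G₂)
  | exR (Ξ : Ctxx L) (Φ : Finset (NCon L)) (X : ℕ) (σ : NomSort L.NSort L.DSort)
      (C : NCon L) (G : NGoal L) :
      EntC Ξ Φ (NCon.ex X σ C) → UDe Δ (CtxBind.v X σ :: Ξ) (insert C Φ) G →
      UDe Δ Ξ Φ (NGoal.ex X σ G)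
  | nuR (Ξ : Ctxx L) (Φ : Finset (NCon L)) (a : L.Name) (C : NCon L) (G : NGoal L) :
      EntC Ξ Φ (NCon.nu a C) → UDe Δ (CtxBind.n a :: Ξ) (insert C Φ) G →
      UDe Δ Ξ Φ (NGoal.nu a G)
  | sel (Ξ : Ctxx L) (Φ : Finset (NCon L)) (D : NCl L) (A : NAtom L) :
      D ∈ Δ → FDe Δ Ξ Φ D A → UDe Δ Ξ Φ (NGoal.atom A)

/-- Focused derivability for ≈-resolution, `Σ;Δ;∇ ⟶≈ [D] ⇒ A`. -/
inductive FDe (Δ : Set (NCl L)) : Ctxx L → Finset (NCon L) → NCl L → NAtom L → Prop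
  | hyp (Ξ : Ctxx L) (Φ : Finset (NCon L)) (A' A : NAtom L) :
      EntC Ξ Φ (NCon.aeqA A' A) → FDe Δ Ξ Φ (NCl.atom A') A
  | andL₁ (Ξ : Ctxx L) (Φ : Finset (NCon L)) (D₁ D₂ : NCl L) (A : NAtom L) :
      FDe Δ Ξ Φ D₁ A → FDe Δ Ξ Φ (NCl.and D₁ D₂) A
  | andL₂ (Ξ : Ctxx L) (Φ : Finset (NCon L)) (D₁ D₂ : NCl L) (A : NAtom L) :
      FDe Δ Ξ Φ D₂ A → FDe Δ Ξ Φ (NCl.and D₁ D₂) A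
  | impL (Ξ : Ctxx L) (Φ : Finset (NCon L)) (G : NGoal L) (D : NCl L) (A : NAtom L) :
      FDe Δ Ξ Φ D A → UDe Δ Ξ Φ G → FDe Δ Ξ Φ (NCl.imp G D) A
  | allL (Ξ : Ctxx L) (Φ : Finset (NCon L)) (X : ℕ) (σ : NomSort L.NSort L.DSort)
      (C : NCon L) (D : NCl L) (A : NAtom L) :
      EntC Ξ Φ (NCon.ex X σ C) → FDe Δ (CtxBind.v X σ :: Ξ) (insert C Φ) D A →
      FDe Δ Ξ Φ (NCl.all X σ D) A
  | nuL (Ξ : Ctxx L) (Φ : Finset (NCon L)) (a : L.Name) (C : NCon L) (D : NCl L)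
      (A : NAtom L) :
      EntC Ξ Φ (NCon.nu a C) → FDe Δ (CtxBind.n a :: Ξ) (insert C Φ) D A →
      FDe Δ Ξ Φ (NCl.nu a D) A
end

/-! ### Residuated proof search -/

mutual
/-- Residuated uniform derivability `Σ;Δ ⟶ G ↘ C`. -/
inductive RG (Δ : Set (NCl L)) : Ctxx L → NGoal L → NCon L → Prop
  | con (Ξ : Ctxx L) (C : NCon L) : RG Δ Ξ (NGoal.con C) C
  | top (Ξ : Ctxx L) : RG Δ Ξ NGoal.tt NCon.tt
  | andR (Ξ : Ctxx L) (G₁ G₂ : NGoal L) (C₁ C₂ : NCon L) :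
      RG Δ Ξ G₁ C₁ → RG Δ Ξ G₂ C₂ → RG Δ Ξ (NGoal.and G₁ G₂) (NCon.and C₁ C₂)
  | orR₁ (Ξ : Ctxx L) (G₁ G₂ : NGoal L) (C : NCon L) :
      RG Δ Ξ G₁ C → RG Δ Ξ (NGoal.or G₁ G₂) C
  | orR₂ (Ξ : Ctxx L) (G₁ G₂ : NGoal L) (C : NCon L) :
      RG Δ Ξ G₂ C → RG Δ Ξ (NGoal.or G₁ G₂) C
  | exR (Ξ : Ctxx L) (X : ℕ) (σ : NomSort L.NSort L.DSort) (G : NGoal L) (C : NCon L) :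
      RG Δ (CtxBind.v X σ :: Ξ) G C → RG Δ Ξ (NGoal.ex X σ G) (NCon.ex X σ C)
  | nuR (Ξ : Ctxx L) (a : L.Name) (G : NGoal L) (C : NCon L) :
      RG Δ (CtxBind.n a :: Ξ) G C → RG Δ Ξ (NGoal.nu a G) (NCon.nu a C)
  | back (Ξ : Ctxx L) (A : NAtom L) (D : NCl L) (G : NGoal L) (C : NCon L) :
      D ∈ Δ → RF Δ Ξ D A G → RG Δ Ξ G C → RG Δ Ξ (NGoal.atom A) C

/-- Residuated focused derivability `Σ;Δ ⟶ [D] ⇒ A ↘ G`. -/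
inductive RF (Δ : Set (NCl L)) : Ctxx L → NCl L → NAtom L → NGoal L → Prop
  | hyp (Ξ : Ctxx L) (A' A : NAtom L) :
      RF Δ Ξ (NCl.atom A') A (NGoal.con (NCon.simA A A'))
  | andL₁ (Ξ : Ctxx L) (D₁ D₂ : NCl L) (A : NAtom L) (G : NGoal L) :
      RF Δ Ξ D₁ A G → RF Δ Ξ (NCl.and D₁ D₂) A G
  | andL₂ (Ξ : Ctxx L) (D₁ D₂ : NCl L) (A : NAtom L) (G : NGoal L) :
      RF Δ Ξ D₂ A G → RF Δ Ξ (NCl.and D₁ D₂) A G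
  | impL (Ξ : Ctxx L) (G : NGoal L) (D : NCl L) (A : NAtom L) (G' : NGoal L) :
      RF Δ Ξ D A G' → RF Δ Ξ (NCl.imp G D) A (NGoal.and G G')
  | allL (Ξ : Ctxx L) (X : ℕ) (σ : NomSort L.NSort L.DSort) (D : NCl L) (A : NAtom L)
      (G : NGoal L) :
      RF Δ (CtxBind.v X σ :: Ξ) D A G → RF Δ Ξ (NCl.all X σ D) A (NGoal.ex X σ G)
  | nuL (Ξ : Ctxx L) (a : L.Name) (D : NCl L) (A : NAtom L) (G : NGoal L) :
      RF Δ (CtxBind.n a :: Ξ) D A G → RF Δ Ξ (NCl.nu a D) A (NGoal.nu a G)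
end

/-! ### Operational semantics -/

/-- Operational states `⟨Σ; Γ; ∇⟩`. -/
structure OState (L : NomSig) : Type where
  ctx : Ctxx L
  goals : List (NGoal L)
  cons : Finset (NCon L)

/-- The operational transition relation relative to a program `Δ`. -/
inductive OStep (Δ : Set (NCl L)) : OState L → OState L → Prop
  | back (Ξ : Ctxx L) (Φ : Finset (NCon L)) (Γ : List (NGoal L)) (D : NCl L)
      (A : NAtom L) (G : NGoal L) :
      D ∈ Δ → RF Δ Ξ D A G →
      OStep Δ ⟨Ξ, NGoal.atom A :: Γ, Φ⟩ ⟨Ξ, G :: Γ, Φ⟩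
  | con (Ξ : Ctxx L) (Φ : Finset (NCon L)) (Γ : List (NGoal L)) (C : NCon L) :
      (∃ θ : ℕ → Tm L, SubstOk Ξ θ ∧ SatAll θ (insert C Φ)) →
      OStep Δ ⟨Ξ, NGoal.con C :: Γ, Φ⟩ ⟨Ξ, Γ, insert C Φ⟩
  | top (Ξ : Ctxx L) (Φ : Finset (NCon L)) (Γ : List (NGoal L)) :
      OStep Δ ⟨Ξ, NGoal.tt :: Γ, Φ⟩ ⟨Ξ, Γ, Φ⟩
  | and (Ξ : Ctxx L) (Φ : Finset (NCon L)) (Γ : List (NGoal L)) (G₁ G₂ : NGoal L) :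
      OStep Δ ⟨Ξ, NGoal.and G₁ G₂ :: Γ, Φ⟩ ⟨Ξ, G₁ :: G₂ :: Γ, Φ⟩
  | or₁ (Ξ : Ctxx L) (Φ : Finset (NCon L)) (Γ : List (NGoal L)) (G₁ G₂ : NGoal L) :
      OStep Δ ⟨Ξ, NGoal.or G₁ G₂ :: Γ, Φ⟩ ⟨Ξ, G₁ :: Γ, Φ⟩
  | or₂ (Ξ : Ctxx L) (Φ : Finset (NCon L)) (Γ : List (NGoal L)) (G₁ G₂ : NGoal L) :
      OStep Δ ⟨Ξ, NGoal.or G₁ G₂ :: Γ, Φ⟩ ⟨Ξ, G₂ :: Γ, Φ⟩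
  | ex (Ξ : Ctxx L) (Φ : Finset (NCon L)) (Γ : List (NGoal L)) (X : ℕ)
      (σ : NomSort L.NSort L.DSort) (G : NGoal L) :
      OStep Δ ⟨Ξ, NGoal.ex X σ G :: Γ, Φ⟩ ⟨CtxBind.v X σ :: Ξ, G :: Γ, Φ⟩
  | nu (Ξ : Ctxx L) (Φ : Finset (NCon L)) (Γ : List (NGoal L)) (a : L.Name)
      (G : NGoal L) :
      OStep Δ ⟨Ξ, NGoal.nu a G :: Γ, Φ⟩ ⟨CtxBind.n a :: Ξ, G :: Γ, Φ⟩

/-- `∃Σ[C]`: close a constraint by quantifying over all bindings of a context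
(innermost quantifier for the most recent binding). -/
def exCtx : Ctxx L → NCon L → NCon L
  | [], C => C
  | CtxBind.v X σ :: Ξ, C => exCtx Ξ (NCon.ex X σ C)
  | CtxBind.n a :: Ξ, C => exCtx Ξ (NCon.nu a C)

/-- The conjunction of a finite set of constraints. -/
def bigAnd (Φ : Finset (NCon L)) : NCon L := Φ.toList.foldr NCon.and NCon.tt
/-! ### Renaming and substitution of terms -/

theorem Tm.induction_list {P : Tm L → Prop} (hvar : ∀ X, P (Tm.var X))
    (hname : ∀ c, P (Tm.name c))
    (happ : ∀ g ts, (∀ t ∈ ts, P t) → P (Tm.app g ts))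
    (habs : ∀ c t, P t → P (Tm.abs c t)) (t : Tm L) : P t := by
  match t with
  | Tm.var X => exact hvar X
  | Tm.name c => exact hname c
  | Tm.app g ts =>
    exact happ g ts fun t ht => Tm.induction_list hvar hname happ habs t
  | Tm.abs c t => exact habs c t (Tm.induction_list hvar hname happ habs t)
termination_by sizeOf t
decreasing_by
  · have := List.sizeOf_lt_of_mem ht
    simp only [Tm.app.sizeOf_spec]
    omega
  · simp only [Tm.abs.sizeOf_spec]
    omega

theorem Tm.rename_app (f : L.Name → L.Name) (g : L.Func) (ts : List (Tm L)) :
    (Tm.app g ts).rename f = Tm.app g (ts.map (Tm.rename f)) := by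
  rw [Tm.rename]; simp

theorem Tm.subst_app (θ : ℕ → Tm L) (g : L.Func) (ts : List (Tm L)) :
    (Tm.app g ts).subst θ = Tm.app g (ts.map (Tm.subst θ)) := by
  rw [Tm.subst]; simp

theorem Tm.rename_rename (f g : L.Name → L.Name) (t : Tm L) :
    (t.rename f).rename g = t.rename (g ∘ f) := by
  induction t using Tm.induction_list with
  | hvar X => simp [Tm.rename]
  | hname c => simp [Tm.rename]
  | happ k ts ih => simpa [Tm.rename_app] using ih
  | habs c t ih => simpa [Tm.rename] using ih

theorem Tm.rename_id (t : Tm L) : t.rename id = t := by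
  induction t using Tm.induction_list with
  | hvar X => simp [Tm.rename]
  | hname c => simp [Tm.rename]
  | happ k ts ih =>
    rw [Tm.rename_app, List.map_congr_left (g := id) (by simpa using ih), List.map_id]
  | habs c t ih => simpa [Tm.rename] using ih

theorem Tm.rename_subst (f : L.Name → L.Name) (θ : ℕ → Tm L) (t : Tm L) :
    (t.subst θ).rename f = (t.rename f).subst (fun X => (θ X).rename f) := by
  induction t using Tm.induction_list with
  | hvar X => simp [Tm.rename, Tm.subst]
  | hname c => simp [Tm.rename, Tm.subst]
  | happ k ts ih => simpa [Tm.rename_app, Tm.subst_app] using ih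
  | habs c t ih => simpa [Tm.rename, Tm.subst] using ih

/-- Swappings are natural under injective renamings: `f ∘ (a b) = (f a  f b) ∘ f`. -/
theorem comp_swapName {f : L.Name → L.Name} (hf : Function.Injective f) (a b : L.Name) :
    f ∘ swapName a b = swapName (f a) (f b) ∘ f := by
  funext c
  simp only [Function.comp, swapName, hf.eq_iff]
  split_ifs <;> rfl

theorem Tm.rename_swap {f : L.Name → L.Name} (hf : Function.Injective f) (a b : L.Name)
    (t : Tm L) : (t.swap a b).rename f = (t.rename f).swap (f a) (f b) := by
  simp only [Tm.swap, Tm.rename_rename, comp_swapName hf]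

/-! ### Equivariance of the judgements on terms -/

theorem Fresh.rename {f : L.Name → L.Name} (hf : Function.Injective f) {a : L.Name} {t : Tm L}
    (h : Fresh a t) : Fresh (f a) (t.rename f) := by
  induction h with
  | name b hab => rw [Tm.rename]; exact .name _ _ (hf.ne hab)
  | app g ts _ ih =>
    rw [Tm.rename_app]
    refine .app _ _ _ fun u hu => ?_
    obtain ⟨t, ht, rfl⟩ := List.mem_map.1 hu
    exact ih t ht
  | absSame t => rw [Tm.rename]; exact .absSame _ _
  | absDiff b t hab _ ih => rw [Tm.rename]; exact .absDiff _ _ _ (hf.ne hab) ih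

theorem Aeq.rename {f : L.Name → L.Name} (hf : Function.Injective f) {t u : Tm L}
    (h : Aeq t u) : Aeq (t.rename f) (u.rename f) := by
  induction h with
  | name a => rw [Tm.rename]; exact .name _
  | app g ts us hl _ ih =>
    rw [Tm.rename_app, Tm.rename_app]
    refine .app _ _ _ (by simpa using hl) fun p hp => ?_
    rw [List.zip_map] at hp
    obtain ⟨q, hq, rfl⟩ := List.mem_map.1 hp
    exact ih q hq
  | absSame a t u _ ih => rw [Tm.rename, Tm.rename]; exact .absSame _ _ _ ih
  | absDiff a b t u hfr _ ih =>
    rw [Tm.rename, Tm.rename]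
    rw [Tm.rename_swap hf] at ih
    exact .absDiff _ _ _ _ (hfr.rename hf) ih

theorem IsTm.rename {f : L.Name → L.Name} (hs : ∀ c, (f c).1 = c.1) {t : Tm L}
    {σ : NomSort L.NSort L.DSort} (h : IsTm t σ) : IsTm (t.rename f) σ := by
  induction h with
  | name a => rw [Tm.rename, ← hs a]; exact .name _
  | app g ts hl _ ih =>
    rw [Tm.rename_app]
    refine .app _ _ (by simpa using hl) fun p hp => ?_
    rw [List.zip_map_left] at hp
    obtain ⟨q, hq, rfl⟩ := List.mem_map.1 hp
    exact ih q hq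
  | abs a t σ _ ih => rw [Tm.rename, ← hs a]; exact .abs _ _ _ ih

theorem Tm.FNa.rename {f : L.Name → L.Name} (hf : Function.Injective f) {a : L.Name} {t : Tm L}
    (h : Tm.FNa a t) : Tm.FNa (f a) (t.rename f) := by
  induction h with
  | name => rw [Tm.rename]; exact .name _
  | app g ts t ht _ ih =>
    rw [Tm.rename_app]
    exact .app _ _ _ _ (List.mem_map_of_mem ht) ih
  | abs b t hab _ ih => rw [Tm.rename]; exact .abs _ _ _ (hf.ne hab) ih

/-- If `π` witnesses `t ∼ u`, then the conjugate `f ∘ π ∘ f` witnesses `f·t ∼ f·u`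
for an involutive sort-preserving renaming `f`. -/
theorem SimTm.rename {f : L.Name → L.Name} (hf : Function.Involutive f)
    (hs : ∀ c, (f c).1 = c.1) {t u : Tm L} (h : SimTm t u) :
    SimTm (t.rename f) (u.rename f) := by
  obtain ⟨π, ⟨hbij, hsort, hfin⟩, hA⟩ := h
  refine ⟨f ∘ π ∘ f, ⟨hf.bijective.comp (hbij.comp hf.bijective), fun c => ?_, ?_⟩, ?_⟩
  · simp [hs, hsort]
  · refine (hfin.preimage hf.injective.injOn).subset fun c hc hπ => hc ?_
    simp only [Function.comp]
    rw [hπ, hf c]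
  · have hcomp : (f ∘ π ∘ f) ∘ f = f ∘ π := by
      funext c
      simp [hf c]
    rw [Tm.rename_rename, hcomp, ← Tm.rename_rename]
    exact hA.rename hf.injective

/-! ### Equivariance of satisfaction -/

theorem NAtom.rename_rename (f g : L.Name → L.Name) (A : NAtom L) :
    (A.rename f).rename g = A.rename (g ∘ f) := by
  simp [NAtom.rename, Tm.rename_rename]

theorem NAtom.rename_id (A : NAtom L) : A.rename id = A := by
  simp [NAtom.rename, funext Tm.rename_id]

theorem NAtom.rename_subst (f : L.Name → L.Name) (θ : ℕ → Tm L) (A : NAtom L) :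
    (A.subst θ).rename f = (A.rename f).subst (fun X => (θ X).rename f) := by
  simp [NAtom.rename, NAtom.subst, Tm.rename_subst]

theorem NFm.rename_rename (f g : L.Name → L.Name) (φ : NFm L) :
    (φ.rename f).rename g = φ.rename (g ∘ f) := by
  induction φ <;> simp [NFm.rename, Tm.rename_rename, NAtom.rename_rename, *]

theorem NFm.rename_id (φ : NFm L) : φ.rename id = φ := by
  induction φ <;> simp [NFm.rename, Tm.rename_id, NAtom.rename_id, *]

theorem update_rename (f : L.Name → L.Name) (θ : ℕ → Tm L) (X : ℕ) :
    (fun Y => (Function.update θ X (Tm.var X) Y).rename f) =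
      Function.update (fun Y => (θ Y).rename f) X (Tm.var X) := by
  funext Y
  by_cases h : Y = X
  · subst h; simp [Tm.rename]
  · simp [h]

theorem NFm.rename_subst (f : L.Name → L.Name) (φ : NFm L) : ∀ θ : ℕ → Tm L,
    (φ.subst θ).rename f = (φ.rename f).subst (fun X => (θ X).rename f) := by
  induction φ <;> intro θ <;>
    simp [NFm.rename, NFm.subst, Tm.rename_subst, NAtom.rename_subst, update_rename, *]

theorem NFm.rename_substSingle (f : L.Name → L.Name) (φ : NFm L) (X : ℕ) (t : Tm L) :
    (φ.subst (substSingle X t)).rename f = (φ.rename f).subst (substSingle X (t.rename f)) := by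
  rw [NFm.rename_subst]
  congr 1
  funext Y
  by_cases h : Y = X <;> simp [substSingle, h, Tm.rename]

theorem NFm.rename_swap {f : L.Name → L.Name} (hf : Function.Injective f) (a b : L.Name)
    (φ : NFm L) : (φ.swap a b).rename f = (φ.rename f).swap (f a) (f b) := by
  simp only [NFm.swap, NFm.rename_rename, comp_swapName hf]

theorem NAtom.FNa.rename {f : L.Name → L.Name} (hf : Function.Injective f) {a : L.Name}
    {A : NAtom L} (h : NAtom.FNa a A) : NAtom.FNa (f a) (A.rename f) := by
  obtain ⟨t, ht, h⟩ := h
  exact ⟨t.rename f, List.mem_map_of_mem ht, h.rename hf⟩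

theorem NFm.FNa.rename {f : L.Name → L.Name} (hf : Function.Injective f) {a : L.Name}
    {φ : NFm L} (h : NFm.FNa a φ) : NFm.FNa (f a) (φ.rename f) := by
  induction h with
  | atom A h => exact .atom _ _ (h.rename hf)
  | eq₁ t u h => exact .eq₁ _ _ _ (h.rename hf)
  | eq₂ t u h => exact .eq₂ _ _ _ (h.rename hf)
  | frN t => exact .frN _ _
  | frT c t h => exact .frT _ _ _ (h.rename hf)
  | sim₁ t u h => exact .sim₁ _ _ _ (h.rename hf)
  | sim₂ t u h => exact .sim₂ _ _ _ (h.rename hf)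
  | imp₁ φ ψ _ ih => exact .imp₁ _ _ _ ih
  | imp₂ φ ψ _ ih => exact .imp₂ _ _ _ ih
  | and₁ φ ψ _ ih => exact .and₁ _ _ _ ih
  | and₂ φ ψ _ ih => exact .and₂ _ _ _ ih
  | or₁ φ ψ _ ih => exact .or₁ _ _ _ ih
  | or₂ φ ψ _ ih => exact .or₂ _ _ _ ih
  | all X σ φ _ ih => exact .all _ _ _ _ ih
  | ex X σ φ _ ih => exact .ex _ _ _ _ ih
  | nu c φ hac _ ih => exact .nu _ _ _ (hf.ne hac) ih

theorem NFm.rename_involutive {f : L.Name → L.Name} (hf : Function.Involutive f) (φ : NFm L) :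
    (φ.rename f).rename f = φ := by
  rw [NFm.rename_rename, hf.comp_self, NFm.rename_id]

theorem Tm.rename_involutive {f : L.Name → L.Name} (hf : Function.Involutive f) (t : Tm L) :
    (t.rename f).rename f = t := by
  rw [Tm.rename_rename, hf.comp_self, Tm.rename_id]

/-- Equivariance of satisfaction: an involutive sort-preserving renaming under which `H` is
stable preserves and reflects truth in `H`. The proof is by induction on the size of `φ`,
since the quantifier cases pass to substitution or swapping instances of a subformula. The
formula need not be closed. -/
theorem fmSat_rename {H : Set (NAtom L)} {f : L.Name → L.Name} (hf : Function.Involutive f)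
    (hs : ∀ c, (f c).1 = c.1) (hH : ∀ A, A.rename f ∈ H ↔ A ∈ H) (φ : NFm L) :
    FmSat H (φ.rename f) ↔ FmSat H φ := by
  induction hn : φ.size using Nat.strong_induction_on generalizing φ with
  | _ n ih =>
  subst hn
  have hsz : ∀ ψ : NFm L, ψ.size < φ.size → (FmSat H (ψ.rename f) ↔ FmSat H ψ) :=
    fun ψ h => ih _ h ψ rfl
  clear ih
  cases φ with
  | tt => simp [NFm.rename]
  | ff => simp [NFm.rename]
  | atom A => simpa [NFm.rename, FmSat] using hH A
  | eq t u =>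
    simp only [NFm.rename, FmSat]
    refine ⟨fun h => ?_, fun h => h.rename hf.injective⟩
    simpa only [Tm.rename_involutive hf] using h.rename hf.injective
  | fr a t =>
    simp only [NFm.rename, FmSat]
    refine ⟨fun h => ?_, fun h => h.rename hf.injective⟩
    simpa only [Tm.rename_involutive hf, hf a] using h.rename hf.injective
  | sim t u =>
    simp only [NFm.rename, FmSat]
    refine ⟨fun h => ?_, fun h => h.rename hf hs⟩
    simpa only [Tm.rename_involutive hf] using h.rename hf hs
  | imp φ ψ =>
    simp only [NFm.rename, FmSat]
    rw [hsz φ (by simp only [NFm.size]; omega), hsz ψ (by simp only [NFm.size]; omega)]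
  | and φ ψ =>
    simp only [NFm.rename, FmSat]
    rw [hsz φ (by simp only [NFm.size]; omega), hsz ψ (by simp only [NFm.size]; omega)]
  | or φ ψ =>
    simp only [NFm.rename, FmSat]
    rw [hsz φ (by simp only [NFm.size]; omega), hsz ψ (by simp only [NFm.size]; omega)]
  | all X σ φ =>
    have key : ∀ t, FmSat H ((φ.rename f).subst (substSingle X (t.rename f))) ↔
        FmSat H (φ.subst (substSingle X t)) := fun t => by
      rw [← NFm.rename_substSingle]
      exact hsz _ (by simp [NFm.size])
    simp only [NFm.rename, FmSat]
    refine ⟨fun h t ht => (key t).1 (h _ (ht.rename hs)), fun h t ht => ?_⟩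
    simpa only [Tm.rename_involutive hf] using (key (t.rename f)).2 (h _ (ht.rename hs))
  | ex X σ φ =>
    have key : ∀ t, FmSat H ((φ.rename f).subst (substSingle X (t.rename f))) ↔
        FmSat H (φ.subst (substSingle X t)) := fun t => by
      rw [← NFm.rename_substSingle]
      exact hsz _ (by simp [NFm.size])
    simp only [NFm.rename, FmSat]
    refine ⟨fun ⟨t, ht, h⟩ => ⟨t.rename f, ht.rename hs, (key _).1 ?_⟩,
      fun ⟨t, ht, h⟩ => ⟨t.rename f, ht.rename hs, (key t).2 h⟩⟩
    simpa only [Tm.rename_involutive hf] using h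
  | nu c φ =>
    have key : ∀ b, FmSat H ((φ.rename f).swap (f b) (f c)) ↔ FmSat H (φ.swap b c) := fun b => by
      rw [← NFm.rename_swap hf.injective]
      exact hsz _ (by simp [NFm.size])
    simp only [NFm.rename, FmSat]
    refine ⟨fun h b hb hfr => (key b).1 (h _ (by rw [hs, hs, hb]) fun hn => hfr ?_),
      fun h b hb hfr => ?_⟩
    · have := NFm.FNa.rename hf.injective hn
      simpa only [NFm.rename, NFm.rename_involutive hf, hf b, hf c] using this
    · have := (key (f b)).2 (h (f b) (by rw [hs, hb, hs]) fun hn => hfr ?_)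
      · rwa [hf b] at this
      · have := NFm.FNa.rename hf.injective hn
        simpa only [NFm.rename, hf b] using this

/-! ### Swappings -/

theorem swapName_involutive (a b : L.Name) : Function.Involutive (swapName a b) := by
  intro c
  unfold swapName
  split_ifs <;> simp_all

theorem swapName_sort {a b : L.Name} (h : a.1 = b.1) (c : L.Name) :
    (swapName a b c).1 = c.1 := by
  unfold swapName
  split_ifs <;> simp_all

theorem fmSat_swap {H : Set (NAtom L)} (hequiv : EquivariantSet H) {a b : L.Name}
    (h : a.1 = b.1) (φ : NFm L) : FmSat H (φ.swap a b) ↔ FmSat H φ := by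
  have hmem : ∀ A ∈ H, A.rename (swapName a b) ∈ H := fun A hA =>
    hequiv a b h ▸ Set.mem_image_of_mem (NAtom.swap a b) hA
  refine fmSat_rename (swapName_involutive a b) (swapName_sort h) (fun A => ⟨fun hA => ?_, hmem A⟩) φ
  have := hmem _ hA
  rwa [NAtom.rename_rename, (swapName_involutive a b).comp_self, NAtom.rename_id] at this

/-! **Statement 1.**  Equivalent characterizations of satisfaction of a
И-quantified closed formula in an equivariant Herbrand interpretation. -/
theorem stmt1 (L : NomSig)
    (hinhab : ∀ σ : NomSort L.NSort L.DSort, ∃ t : Tm L, IsTm t σ)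
    (H : Set (NAtom L)) (hsub : H ⊆ BL L) (hequiv : EquivariantSet H)
    (a : L.Name) (φ : NFm L) (hclosed : ∀ X : ℕ, ¬ NFm.FVa X (NFm.nu a φ)) :
    List.TFAE
      [ FmSat H (NFm.nu a φ),
        FmSat H φ,
        {b : L.Name | b.1 = a.1 ∧ ¬ FmSat H (φ.swap a b)}.Finite,
        ∃ b : L.Name, b.1 = a.1 ∧ ¬ NFm.FNa b (NFm.nu a φ) ∧ FmSat H (φ.swap a b) ] := by
  have hsw : ∀ b : L.Name, b.1 = a.1 → (FmSat H (φ.swap a b) ↔ FmSat H φ) :=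
    fun b hb => fmSat_swap hequiv hb.symm φ
  have hsw' : ∀ b : L.Name, b.1 = a.1 → (FmSat H (φ.swap b a) ↔ FmSat H φ) :=
    fun b hb => fmSat_swap hequiv hb φ
  -- The bound name `a` is itself an admissible witness: it is not free in `Иa.φ`.
  have ha : ¬ NFm.FNa a (NFm.nu a φ) := by
    rintro (_ | _)
    contradiction
  tfae_have 1 ↔ 2 := by
    rw [FmSat]
    exact ⟨fun h => (hsw' a rfl).1 (h a rfl ha), fun h b hb _ => (hsw' b hb).2 h⟩
  tfae_have 2 → 3 := fun h => by
    convert Set.finite_empty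
    ext b
    simpa using fun hb => (hsw b hb).2 h
  tfae_have 3 → 2 := fun hfin => by
    -- If `φ` failed, the exceptional set would contain all the infinitely many names of the sort.
    by_contra hφ
    refine Set.infinite_of_injective_forall_mem (f := fun n : ℕ => ((a.1, n) : L.Name))
      (fun m n hmn => (Prod.ext_iff.1 hmn).2) (fun n => ?_) hfin
    exact ⟨rfl, fun h => hφ ((hsw (a.1, n) rfl).1 h)⟩
  tfae_have 2 → 4 := fun h => ⟨a, rfl, ha, (hsw a rfl).2 h⟩
  tfae_have 4 → 2 := fun ⟨b, hb, _, h⟩ => (hsw b hb).1 h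
  tfae_finish

end
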